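/- arXiv:2105.04357 — 3 statements merged into one kernel-verified Lean document; each statement's English description precedes it below -/
import Mathlib

section
/- Let n, k, t be natural numbers with t₀ = ⌈n/3⌉ − 1, 2n > 3k + 6t, and n > 2(k + t). Then, as rational numbers, (n − t₀) − (n + t)/2 ≥ ⌊(k + t − n)/2 + t₀⌋ + 1. (Key counting step of Lemma 'lem:can': when n > (3/2)k + 3t and n > 2(k+t), at least m(k,t) rational coalition members must participate in both quorums of a disagreement on predecisions, where m(k,t) = ⌊(k+t−n)/2 + t₀⌋ + 1.) -/
/-!
Since `⌊x⌋ ≤ x`, it suffices to show `(n - t₀) - (n + t)/2 ≥ (k + t - n)/2 + t₀ + 1`, that is,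
`k + 2t + 4t₀ + 2 ≤ 2n`. This follows over the integers from `3 t₀ < n` (the definition of `t₀`
as `⌈n/3⌉ - 1`) and `3k + 6t < 2n`.
-/


/-- Key counting step of Lemma `lem:can`: when `n > (3/2)k + 3t` and `n > 2(k + t)`,
at least `m(k,t) = ⌊(k + t - n)/2 + t₀⌋ + 1` rational coalition members must take part
in both quorums of a disagreement on predecisions:
`(n - t₀) - (n + t)/2 ≥ m(k,t)` as rationals. -/
theorem stmt_8 (n k t : ℕ)
    (t₀ : ℤ) (ht₀ : t₀ = ⌈(n : ℚ) / 3⌉ - 1)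
    (h1 : 2 * n > 3 * k + 6 * t) (h2 : n > 2 * (k + t)) :
    ((n : ℚ) - (t₀ : ℚ)) - ((n : ℚ) + (t : ℚ)) / 2 ≥
      ((⌊((k : ℚ) + t - n) / 2 + (t₀ : ℚ)⌋ : ℤ) : ℚ) + 1 := by
  -- `⌈n/3⌉ < n/3 + 1` gives `3 t₀ < n`, stated over `ℤ`.
  have h3 : 3 * t₀ < (n : ℤ) := by
    have h := Int.ceil_lt_add_one ((n : ℚ) / 3)
    have h' : (t₀ : ℚ) = (⌈(n : ℚ) / 3⌉ : ℚ) - 1 := by rw [ht₀]; push_cast; rfl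
    have h'' : 3 * (t₀ : ℚ) < (n : ℚ) := by linarith
    exact_mod_cast h''
  -- The bounds `3 t₀ < n` and `3 (k + 2t) < 2n` only give `2n - k - 2t - 4t₀ ≥ 5/3`;
  -- integrality of the left side improves this to `2`.
  have h4 : (k : ℤ) + 2 * t + 4 * t₀ + 2 ≤ 2 * n := by omega
  have h5 : (k : ℚ) + 2 * t + 4 * t₀ + 2 ≤ 2 * n := by exact_mod_cast h4
  have h6 := Int.floor_le (((k : ℚ) + t - n) / 2 + (t₀ : ℚ))
  linarith
end

section
/- Let n, k, t be natural numbers with t₀ = ⌈n/3⌉ − 1 ≥ 1, k ≥ 1, 2n > 3k + 6t, n > 2(k + t), and suppose m(k,t) = ⌊(k + t − n)/2 + t₀⌋ + 1 ≥ 1. Then m(k,t)·(t₀ + k) ≤ k·(t₀ + 1); equivalently, m(k,t) / (k·(t₀ − m(k,t) + 1)) ≤ 1/t₀. (Arithmetic content of Corollary 'thm:everything': the uniform deposit fraction d = 1/(⌈n/3⌉ − 1) + δ with any δ > 0 exceeds the required bound m(k,t)/(k(t₀ − m(k,t) + 1)) simultaneously for every feasible coalition size (k, t).) -/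
/-!
The right-hand side over `t₀ + k` is at least `k t₀ / (k + t₀) ≥ min k t₀ / 2`, while feasibility
bounds the number of baiters by about a quarter of both `k` (from `2n > 3k + 6t`) and `t₀`
(from `n > 2(k + t)`). The additive errors coming from the rounding are harmless once `M ≥ 2`,
where `2M ≤ k` and `2M ≤ t₀` hold exactly; for `M = 1` the claim is just `t₀ ≤ k t₀`.
-/


/-- Arithmetic content of Corollary `thm:everything`: for every feasible coalition
size `(k, t)` (with `n > (3/2)k + 3t` and `n > 2(k + t)`), the required deposit bound
satisfies `m(k,t)·(t₀ + k) ≤ k·(t₀ + 1)`, i.e. `m(k,t)/(k(t₀ - m(k,t) + 1)) ≤ 1/t₀`. -/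
theorem stmt_12 (n k t : ℕ)
    (t₀ : ℤ) (ht₀ : t₀ = ⌈(n : ℚ) / 3⌉ - 1) (ht₀1 : 1 ≤ t₀)
    (hk : 1 ≤ k) (h1 : 2 * n > 3 * k + 6 * t) (h2 : n > 2 * (k + t))
    (M : ℤ) (hM : M = ⌊((k : ℚ) + t - n) / 2 + (t₀ : ℚ)⌋ + 1) (hM1 : 1 ≤ M) :
    M * (t₀ + k) ≤ k * (t₀ + 1) := by
  have hlo : 3 * t₀ + 1 ≤ (n : ℤ) := by
    have h := Int.ceil_lt_add_one ((n : ℚ) / 3)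
    have e : ((⌈(n : ℚ) / 3⌉ : ℤ) : ℚ) = t₀ + 1 := by rw [ht₀]; push_cast; ring
    rw [e] at h
    have : (3 * t₀ : ℚ) < n := by linarith
    have : 3 * t₀ < (n : ℤ) := by exact_mod_cast this
    omega
  have hf : 2 * M ≤ k + t - n + 2 * t₀ + 2 := by
    have h := Int.floor_le (((k : ℚ) + t - n) / 2 + (t₀ : ℚ))
    have e : ((⌊((k : ℚ) + t - n) / 2 + (t₀ : ℚ)⌋ : ℤ) : ℚ) = M - 1 := by
      rw [hM]; push_cast; ring
    rw [e] at h
    have : (2 * M : ℚ) ≤ k + t - n + 2 * t₀ + 2 := by linarith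
    exact_mod_cast this
  have hk' : (1 : ℤ) ≤ k := by exact_mod_cast hk
  rcases hM1.eq_or_lt with h | h
  · rw [← h]
    nlinarith
  · have hMk : 2 * M ≤ k := by omega
    have hMt : 2 * M ≤ t₀ := by omega
    have a := mul_le_mul_of_nonneg_right hMk (by omega : 0 ≤ t₀)
    have b := mul_le_mul_of_nonneg_right hMt (by omega : (0 : ℤ) ≤ k)
    linarith
end

section
/- Let n, k, t, a, b be natural numbers with t₀ = ⌈n/3⌉ − 1 and a + b + k + t ≤ n, and let m = ⌊(k + t − n)/2 + t₀⌋ + 1 (an integer, floor over ℤ). Then, over the integers, it is not the case that both a + (k + t) − m ≥ n − t₀ and b + (k + t) − m ≥ n − t₀. (First claim of Lemma 'thm:unavoidable': if m(k,t) rational coalition members commit to bait, the remaining coalition cannot complete two disjoint quorums, so the disagreement on predecisions cannot be finalized into a disagreement on decisions.) -/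
/-- First claim of Lemma `thm:unavoidable`: if `m(k,t) = ⌊(k + t - n)/2 + t₀⌋ + 1`
coalition members commit to bait, the remaining coalition cannot complete two disjoint
quorums with disjoint sets of correct players of sizes `a` and `b`. -/
theorem stmt_15 (n k t a b : ℕ)
    (t₀ : ℤ) (ht₀ : t₀ = ⌈(n : ℚ) / 3⌉ - 1)
    (hsum : a + b + k + t ≤ n)
    (M : ℤ) (hM : M = ⌊((k : ℚ) + t - n) / 2 + (t₀ : ℚ)⌋ + 1) :
    ¬ ((a : ℤ) + ((k : ℤ) + t) - M ≥ (n : ℤ) - t₀ ∧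
       (b : ℤ) + ((k : ℤ) + t) - M ≥ (n : ℤ) - t₀) := by
  -- Being a floor plus one, `M` strictly exceeds `(k + t - n) / 2 + t₀`.
  have hlt : ((k : ℚ) + t - n) / 2 + (t₀ : ℚ) < (M : ℚ) := by
    rw [hM]
    push_cast
    exact Int.lt_floor_add_one _
  have hM2 : (k : ℤ) + t - n + 2 * t₀ < 2 * M := by
    have h : (k : ℚ) + t - n + 2 * t₀ < 2 * M := by linarith
    exact_mod_cast h
  -- Adding the two quorum inequalities and bounding `a + b + k + t` by `n` gives
  -- `2 * M ≤ k + t - n + 2 * t₀`, contrary to `hM2`.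
  rintro ⟨ha, hb⟩
  omega
end
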